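/- Let μ > 0, let r > 3, and let f : ℝⁿ → ℝ be a continuously differentiable μ-strongly convex function with global minimizer x*. Let x : (0,∞) → ℝⁿ be a twice differentiable solution of ẍ(t) + (r/t)·ẋ(t) + ∇f(x(t)) = 0 for all t > 0. Then f(x(t)) − f(x*) = O( t^{−(r/2 + 1/2)} ) as t → ∞. -/

import Mathlib

open scoped RealInnerProductSpace

/-!
Put `β = (r + 1) / 2`. The energy
`E(t) = t ^ β * (f (x t) - f z + ‖v t + (β / t) • (x t - z)‖ ^ 2 / 2)` has a derivative in which
this choice of `β` cancels the cross term `⟪v t, x t - z⟫`. The `‖v t‖ ^ 2` term is nonpositive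
since `3 ≤ r`, and the positive `‖x t - z‖ ^ 2` term, of order `t⁻³`, is eventually absorbed by the
one of order `-μ t⁻¹` that strong convexity provides. So `E` is eventually nonincreasing, and
`t ^ β * (f (x t) - f z) ≤ E(t)` stays bounded.
-/

section Flow

variable {F : Type*} [NormedAddCommGroup F] [InnerProductSpace ℝ F]

/-- Quasi-strong convexity of `f` with respect to the point `z`: the strong convexity inequality
is only required between an arbitrary point and `z`. -/
def QuasiStronglyConvexAt [CompleteSpace F] (μ : ℝ) (f : F → ℝ) (z : F) : Prop :=
  ∀ y, f y + ⟪gradient f y, z - y⟫ + μ / 2 * ‖z - y‖ ^ 2 ≤ f z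

/-- On `s`, the curve `x` with velocity `v` solves `ẍ + (r / t) ẋ + ∇f(x) = 0`, the continuous-time
limit of Nesterov's accelerated gradient method; the acceleration is eliminated. At `t = 0` the
friction coefficient `r / t` is the junk value `0`. -/
structure IsNAGFlowOn [CompleteSpace F] (f : F → ℝ) (r : ℝ) (x v : ℝ → F) (s : Set ℝ) : Prop where
  hasDerivAt_position : ∀ t ∈ s, HasDerivAt x (v t) t
  hasDerivAt_velocity : ∀ t ∈ s, HasDerivAt v (-((r / t) • v t) - gradient f (x t)) t

/-- The velocity of the rescaled displacement `t ^ β • (x t - z)` from the anchor `z`, divided by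
`t ^ β`. Its square is the kinetic part of `nagEnergy`. -/
noncomputable def anchoredVelocity (β : ℝ) (z : F) (x v : ℝ → F) (t : ℝ) : F :=
  v t + (β / t) • (x t - z)

/-- The Lyapunov function of the flow: potential gap to `z` plus anchored kinetic energy,
weighted by the rate `t ^ β` to be proved. -/
noncomputable def nagEnergy (f : F → ℝ) (β : ℝ) (z : F) (x v : ℝ → F) (t : ℝ) : ℝ :=
  t ^ β * (f (x t) - f z + 1 / 2 * ‖anchoredVelocity β z x v t‖ ^ 2)

lemma norm_anchoredVelocity_sq (β : ℝ) (z : F) (x v : ℝ → F) (t : ℝ) :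
    ‖anchoredVelocity β z x v t‖ ^ 2 =
      ‖v t‖ ^ 2 + 2 * (β / t) * ⟪v t, x t - z⟫ + (β / t) ^ 2 * ‖x t - z‖ ^ 2 := by
  rw [anchoredVelocity, norm_add_sq_real, inner_smul_right, norm_smul, mul_pow, Real.norm_eq_abs,
    sq_abs]
  ring

lemma rpow_mul_sub_le_nagEnergy {t : ℝ} (ht : 0 ≤ t) (f : F → ℝ) (β : ℝ) (z : F) (x v : ℝ → F) :
    t ^ β * (f (x t) - f z) ≤ nagEnergy f β z x v t :=
  mul_le_mul_of_nonneg_left (le_add_of_nonneg_right (by positivity)) (Real.rpow_nonneg ht β)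

variable {f : F → ℝ} {μ r β t T : ℝ} {z : F} {x v : ℝ → F} {s : Set ℝ}

lemma sub_le_mul_rpow_neg_of_antitoneOn_nagEnergy (hT : 0 < T)
    (hanti : AntitoneOn (nagEnergy f β z x v) (Set.Ici T)) (hTt : T ≤ t) :
    f (x t) - f z ≤ nagEnergy f β z x v T * t ^ (-β) := by
  have ht : 0 < t := hT.trans_le hTt
  rw [Real.rpow_neg ht.le, ← div_eq_mul_inv, le_div_iff₀' (Real.rpow_pos_of_pos ht β)]
  exact (rpow_mul_sub_le_nagEnergy ht.le f β z x v).trans (hanti Set.self_mem_Ici hTt hTt)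

variable [CompleteSpace F]

lemma hasDerivAt_comp_inner_gradient {x' : F} (hf : DifferentiableAt ℝ f (x t))
    (hx : HasDerivAt x x' t) : HasDerivAt (fun τ => f (x τ)) ⟪gradient f (x t), x'⟫ t :=
  (hf.hasGradientAt.hasFDerivAt.comp_hasDerivAt t hx).congr_deriv
    (InnerProductSpace.toDual_apply_apply ..)

lemma QuasiStronglyConvexAt.sub_add_le_inner (hz : QuasiStronglyConvexAt μ f z) (y : F) :
    f y - f z + μ / 2 * ‖y - z‖ ^ 2 ≤ ⟪gradient f y, y - z⟫ := by
  have h := hz y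
  rw [← neg_sub y z, inner_neg_right, norm_neg] at h
  linarith

namespace IsNAGFlowOn

lemma mono {s' : Set ℝ} (h : IsNAGFlowOn f r x v s) (hs : s' ⊆ s) :
    IsNAGFlowOn f r x v s' :=
  ⟨fun t ht => h.hasDerivAt_position t (hs ht), fun t ht => h.hasDerivAt_velocity t (hs ht)⟩

lemma hasDerivAt_anchoredVelocity (h : IsNAGFlowOn f r x v s) (hts : t ∈ s) (ht : t ≠ 0) :
    HasDerivAt (anchoredVelocity β z x v)
      (((β - r) / t) • v t - gradient f (x t) - (β / t ^ 2) • (x t - z)) t := by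
  have hdiv : HasDerivAt (fun τ : ℝ => β / τ) (-(β / t ^ 2)) t := by
    simpa only [div_eq_mul_inv, mul_neg] using (hasDerivAt_inv ht).const_mul β
  refine ((h.hasDerivAt_velocity t hts).add
    (hdiv.smul ((h.hasDerivAt_position t hts).sub_const z))).congr_deriv ?_
  module

lemma hasDerivAt_nagEnergy (h : IsNAGFlowOn f r x v s) (hf : DifferentiableAt ℝ f (x t))
    (hts : t ∈ s) (ht : t ≠ 0) :
    HasDerivAt (nagEnergy f β z x v)
      (t ^ β * (β / t * (f (x t) - f z - ⟪gradient f (x t), x t - z⟫) +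
        (3 * β / 2 - r) / t * ‖v t‖ ^ 2 + β * (2 * β - 1 - r) / t ^ 2 * ⟪v t, x t - z⟫ +
        β ^ 2 * (β - 2) / (2 * t ^ 3) * ‖x t - z‖ ^ 2)) t := by
  have hpotential :=
    (hasDerivAt_comp_inner_gradient hf (h.hasDerivAt_position t hts)).sub_const (f z)
  have hkinetic :=
    (h.hasDerivAt_anchoredVelocity (β := β) (z := z) hts ht).norm_sq.const_mul (1 / 2 : ℝ)
  have hinner : ⟪anchoredVelocity β z x v t,
      ((β - r) / t) • v t - gradient f (x t) - (β / t ^ 2) • (x t - z)⟫ =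
      (β - r) / t * ‖v t‖ ^ 2 + β * (β - r - 1) / t ^ 2 * ⟪v t, x t - z⟫ -
        β ^ 2 / t ^ 3 * ‖x t - z‖ ^ 2 - ⟪gradient f (x t), v t⟫ -
        β / t * ⟪gradient f (x t), x t - z⟫ := by
    rw [anchoredVelocity]
    generalize x t - z = d
    simp only [inner_add_left, inner_sub_right, real_inner_smul_left, real_inner_smul_right,
      real_inner_self_eq_norm_sq]
    rw [real_inner_comm (v t) d, real_inner_comm (gradient f (x t)) (v t),
      real_inner_comm (gradient f (x t)) d]
    field_simp
    ring
  refine ((Real.hasDerivAt_rpow_const (.inl ht)).mul (hpotential.add hkinetic)).congr_deriv ?_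
  simp only [Pi.add_apply]
  rw [hinner, norm_anchoredVelocity_sq, Real.rpow_sub_one ht]
  field_simp
  ring

end IsNAGFlowOn

/-- The bracket in `IsNAGFlowOn.hasDerivAt_nagEnergy`, with `W = f (x t) - f z`, `A = ‖v t‖ ^ 2`,
`B = ⟪v t, x t - z⟫`, `D = ‖x t - z‖ ^ 2` and `G = ⟪gradient f (x t), x t - z⟫`. -/
lemma nagEnergy_rate_nonpos {W A B D G : ℝ} (hr : 3 ≤ r) (ht : 0 < t) (hβ : β = r / 2 + 1 / 2)
    (hA : 0 ≤ A) (hD : 0 ≤ D) (hG : W + μ / 2 * D ≤ G) (hμt : (r - 3) * β ≤ 2 * μ * t ^ 2) :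
    β / t * (W - G) + (3 * β / 2 - r) / t * A + β * (2 * β - 1 - r) / t ^ 2 * B +
      β ^ 2 * (β - 2) / (2 * t ^ 3) * D ≤ 0 := by
  have hrate : β / t * (W - G) + (3 * β / 2 - r) / t * A + β * (2 * β - 1 - r) / t ^ 2 * B +
      β ^ 2 * (β - 2) / (2 * t ^ 3) * D =
      -(β / t * (G - (W + μ / 2 * D)) + (r - 3) / (4 * t) * A +
        β / (4 * t ^ 3) * (2 * μ * t ^ 2 - (r - 3) * β) * D) := by
    subst hβ
    field_simp
    ring
  have hβ0 : 0 ≤ β := by linarith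
  have hgap : 0 ≤ β / t * (G - (W + μ / 2 * D)) := mul_nonneg (by positivity) (sub_nonneg.2 hG)
  have hvelocity : 0 ≤ (r - 3) / (4 * t) * A :=
    mul_nonneg (div_nonneg (sub_nonneg.2 hr) (by positivity)) hA
  have hdist : 0 ≤ β / (4 * t ^ 3) * (2 * μ * t ^ 2 - (r - 3) * β) * D :=
    mul_nonneg (mul_nonneg (by positivity) (sub_nonneg.2 hμt)) hD
  linarith

lemma IsNAGFlowOn.antitoneOn_nagEnergy (h : IsNAGFlowOn f r x v (Set.Ici T))
    (hf : Differentiable ℝ f) (hz : QuasiStronglyConvexAt μ f z) (hr : 3 ≤ r) (hT : 0 < T)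
    (hμT : (r - 3) * (r / 2 + 1 / 2) ≤ 2 * μ * T ^ 2) :
    AntitoneOn (nagEnergy f (r / 2 + 1 / 2) z x v) (Set.Ici T) := by
  have hderiv : ∀ t ∈ Set.Ici T, HasDerivAt (nagEnergy f (r / 2 + 1 / 2) z x v) _ t :=
    fun t ht => h.hasDerivAt_nagEnergy (hf (x t)) ht (hT.trans_le ht).ne'
  refine antitoneOn_of_hasDerivWithinAt_nonpos (convex_Ici T)
    (fun t ht => (hderiv t ht).continuousAt.continuousWithinAt)
    (fun t ht => (hderiv t (interior_subset ht)).hasDerivWithinAt) fun t ht => ?_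
  have hμ : 0 ≤ 2 * μ := nonneg_of_mul_nonneg_left
    ((mul_nonneg (sub_nonneg.2 hr) (by linarith)).trans hμT) (pow_pos hT 2)
  have hTt : T ≤ t := interior_subset ht
  have ht0 : 0 < t := hT.trans_le hTt
  have hμt : (r - 3) * (r / 2 + 1 / 2) ≤ 2 * μ * t ^ 2 := hμT.trans (by gcongr)
  exact mul_nonpos_of_nonneg_of_nonpos (Real.rpow_nonneg ht0.le _) <|
    nagEnergy_rate_nonpos hr ht0 rfl (sq_nonneg _) (sq_nonneg _) (hz.sub_add_le_inner (x t)) hμt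

theorem nag_flow_strongly_convex_polynomial_rate_general {t₀ : ℝ} (hμ : 0 < μ) (hr : 3 ≤ r)
    (hf : Differentiable ℝ f) (hz : QuasiStronglyConvexAt μ f z)
    (h : IsNAGFlowOn f r x v (Set.Ioi t₀)) :
    ∃ T C : ℝ, 0 < T ∧ 0 < C ∧
      ∀ t : ℝ, T ≤ t → f (x t) - f z ≤ C * t ^ (-(r / 2 + 1 / 2)) := by
  have hlarge : ∀ᶠ T : ℝ in Filter.atTop, (r - 3) * (r / 2 + 1 / 2) ≤ 2 * μ * T ^ 2 :=
    ((Filter.tendsto_pow_atTop two_ne_zero).const_mul_atTop (by positivity)).eventually_ge_atTop _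
  obtain ⟨T, ht₀T, hT, hμT⟩ :=
    ((Filter.eventually_gt_atTop t₀).and ((Filter.eventually_gt_atTop 0).and hlarge)).exists
  have hanti := (h.mono (Set.Ici_subset_Ioi.2 ht₀T)).antitoneOn_nagEnergy hf hz hr hT hμT
  refine ⟨T, max (nagEnergy f (r / 2 + 1 / 2) z x v T) 1, hT, by positivity, fun t hTt => ?_⟩
  have ht : 0 < t := hT.trans_le hTt
  exact (sub_le_mul_rpow_neg_of_antitoneOn_nagEnergy hT hanti hTt).trans
    (by gcongr; exact le_max_left _ _)

end Flow

/-- For `μ > 0`, `r > 3` and a continuously differentiable `μ`-strongly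
convex `f` with minimizer `x*`, any twice differentiable solution (on `(0,∞)`) of
`ẍ(t) + (r/t)·ẋ(t) + ∇f(x(t)) = 0` satisfies
`f(x(t)) − f(x*) = O(t^{−(r/2 + 1/2)})` as `t → ∞`. -/
theorem nag_flow_strongly_convex_polynomial_rate {n : ℕ}
    (μ r : ℝ) (hμ : 0 < μ) (hr : 3 < r)
    (f : EuclideanSpace ℝ (Fin n) → ℝ)
    (xstar : EuclideanSpace ℝ (Fin n))
    (hf : ContDiff ℝ 1 f)
    (hmin : ∀ y, f xstar ≤ f y)
    (hsc : ∀ y z : EuclideanSpace ℝ (Fin n),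
      f z ≥ f y + ⟪gradient f y, z - y⟫ + μ / 2 * ‖z - y‖ ^ 2)
    (x v a : ℝ → EuclideanSpace ℝ (Fin n))
    (hx : ∀ t : ℝ, 0 < t → HasDerivAt x (v t) t)
    (hv : ∀ t : ℝ, 0 < t → HasDerivAt v (a t) t)
    (hode : ∀ t : ℝ, 0 < t → a t + (r / t) • v t + gradient f (x t) = 0) :
    ∃ T C : ℝ, 0 < T ∧ 0 < C ∧
      ∀ t : ℝ, T ≤ t → f (x t) - f xstar ≤ C * t ^ (-(r / 2 + 1 / 2)) := by
  have hz : QuasiStronglyConvexAt μ f xstar := fun y => hsc y xstar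
  have hflow : IsNAGFlowOn f r x v (Set.Ioi 0) :=
    ⟨hx, fun t ht => (hv t ht).congr_deriv (by linear_combination (norm := module) hode t ht)⟩
  exact nag_flow_strongly_convex_polynomial_rate_general hμ hr.le (hf.differentiable one_ne_zero)
    hz hflow
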